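/- Let m, n ≥ 1, let Σ ∈ ℝ^{n×n} and Σ_N ∈ ℝ^{mn×mn} be symmetric positive definite, let θ, θ̂ ∈ ℝ^{m×n}, φ ∈ ℝᵐ, and c ≥ 0, and suppose vec(θ − θ̂)ᵀ Σ_N⁻¹ vec(θ − θ̂) ≤ c, where vec denotes column-stacking. Set γ := (θ − θ̂)ᵀ φ, let ρ be the measure on ℝⁿ with Lebesgue density w ↦ min(g_{0,Σ}(w), g_{−γ,Σ}(w)), and let v be the pushforward of ρ under w ↦ (θᵀφ + w, θᵀφ + w). Then v is a sub-probability coupling of N(θ̂ᵀφ, Σ) and N(θᵀφ, Σ) over the diagonal {(a,b) : a = b} with respect to δ := 1 − 2Φ(−(√r / 2) · ‖φ‖), where r := ‖Σ⁻¹‖ · ‖Σ_N‖ · c and ‖·‖ denotes the spectral norm on matrices and the Euclidean norm on vectors; in particular v(ℝⁿ × ℝⁿ) = 2Φ(−½√(γᵀΣ⁻¹γ)) ≥ 2Φ(−(√r/2)‖φ‖) = 1 − δ. -/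

import Mathlib

open Matrix MeasureTheory Set

/-- Density of the multivariate normal distribution `N(μ, S)` with respect to Lebesgue
measure. -/
noncomputable def gaussDensity {ι : Type*} [Fintype ι] [DecidableEq ι] (μ : ι → ℝ)
    (S : Matrix ι ι ℝ) (w : ι → ℝ) : ℝ :=
  (2 * Real.pi) ^ (-(Fintype.card ι : ℝ) / 2) * S.det ^ (-(1 : ℝ) / 2) *
    Real.exp (-(1 / 2) * ((w - μ) ⬝ᵥ (S⁻¹ *ᵥ (w - μ))))

/-- The Gaussian probability measure `N(μ, S)` on `ℝⁿ`. -/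
noncomputable def gaussMeasure {ι : Type*} [Fintype ι] [DecidableEq ι] (μ : ι → ℝ)
    (S : Matrix ι ι ℝ) : Measure (ι → ℝ) :=
  volume.withDensity fun w => ENNReal.ofReal (gaussDensity μ S w)

/-- The standard normal cumulative distribution function. -/
noncomputable def stdNormalCdf (ζ : ℝ) : ℝ :=
  ∫ β in Set.Iic ζ, (2 * Real.pi) ^ (-(1 : ℝ) / 2) * Real.exp (-β ^ 2 / 2)

/-- The spectral norm (operator norm induced by the Euclidean norms) of a real matrix. -/
noncomputable def specNorm {a b : Type*} [Fintype a] [Fintype b] [DecidableEq b]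
    (M : Matrix a b ℝ) : ℝ :=
  ‖LinearMap.toContinuousLinearMap (Matrix.toEuclideanLin M)‖

/-- The Euclidean norm of a real vector. -/
noncomputable def euclNorm {ι : Type*} [Fintype ι] (x : ι → ℝ) : ℝ :=
  Real.sqrt (x ⬝ᵥ x)

/-- The column-stacking (vectorization) of an `m × n` matrix. -/
def vecOf {m n : ℕ} (Δ : Matrix (Fin m) (Fin n) ℝ) : Fin n × Fin m → ℝ :=
  fun q => Δ q.2 q.1

/-!
The likelihood ratio of `N(μ, S)` and `N(ν, S)` is monotone in the linear functional
`w ↦ S⁻¹ (μ - ν) ⬝ᵥ w`, so each density is the smaller one on a half-space bounded by the hyperplane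
halfway between the means. Under both laws this functional is a real Gaussian of variance
`q = (μ - ν) ⬝ᵥ S⁻¹ (μ - ν)`, with means `q` apart, so the common part of the two laws consists of
two equal tails of mass `Φ(-√q / 2)`. Placed on the diagonal, that common part is the coupling. For
`μ - ν = Δᵀ φ`, Cauchy–Schwarz gives `‖Δᵀ φ‖ ≤ ‖vec Δ‖ ‖φ‖`, and the ellipsoid gives
`‖vec Δ‖² ≤ ‖N‖ c`, hence `√q ≤ √(‖S⁻¹‖ ‖N‖ c) ‖φ‖`.
-/

open ProbabilityTheory

open scoped ENNReal NNReal

section Densities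

variable {α β : Type*} [MeasurableSpace α] [MeasurableSpace β]

theorem map_withDensity_comp (μ : Measure α) {T : α → β} (hT : Measurable T) {f : β → ℝ≥0∞}
    (hf : Measurable f) : (μ.withDensity (f ∘ T)).map T = (μ.map T).withDensity f := by
  ext s hs
  rw [Measure.map_apply hT hs, withDensity_apply _ (hT hs), withDensity_apply _ hs,
    setLIntegral_map hs hf hT]
  rfl

theorem lintegral_min_eq_withDensity_add_withDensity (μ : Measure α) {f g : α → ℝ≥0∞}
    (hf : Measurable f) (hg : Measurable g) :
    ∫⁻ x, min (f x) (g x) ∂μ =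
      μ.withDensity f {x | f x ≤ g x} + μ.withDensity g {x | g x < f x} := by
  have h_le : MeasurableSet {x | f x ≤ g x} := measurableSet_le hf hg
  have h_lt : MeasurableSet {x | g x < f x} := measurableSet_lt hg hf
  have h_compl : {x | f x ≤ g x}ᶜ = {x | g x < f x} := by ext x; simp
  rw [← lintegral_add_compl _ h_le, h_compl, withDensity_apply _ h_le, withDensity_apply _ h_lt]
  congr 1
  · exact setLIntegral_congr_fun h_le fun x hx => min_eq_left hx
  · exact setLIntegral_congr_fun h_lt fun x hx => min_eq_right (le_of_lt hx)

theorem pi_withDensity_ofReal {ι : Type*} [Fintype ι] {X : ι → Type*}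
    [∀ i, MeasurableSpace (X i)] (μ : ∀ i, Measure (X i)) [∀ i, SigmaFinite (μ i)]
    {f : ∀ i, X i → ℝ} (hf : ∀ i, Integrable (f i) (μ i)) (hf_nonneg : ∀ i x, 0 ≤ f i x) :
    Measure.pi (fun i => (μ i).withDensity fun x => ENNReal.ofReal (f i x)) =
      (Measure.pi μ).withDensity fun x => ENNReal.ofReal (∏ i, f i (x i)) := by
  have (i : ι) : IsFiniteMeasure ((μ i).withDensity fun x => ENNReal.ofReal (f i x)) :=
    isFiniteMeasure_withDensity_ofReal (hf i).hasFiniteIntegral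
  refine Measure.pi_eq fun s hs => ?_
  have h_int (i : ι) : Integrable (f i) ((μ i).restrict (s i)) := (hf i).restrict
  rw [withDensity_apply _ (.univ_pi hs), Measure.restrict_pi_pi,
    ← ofReal_integral_eq_lintegral_ofReal (.fintype_prod_dep h_int)
      (ae_of_all _ fun x => Finset.prod_nonneg fun i _ => hf_nonneg i (x i)),
    integral_fintype_prod_eq_prod,
    ENNReal.ofReal_prod_of_nonneg fun i _ => integral_nonneg (hf_nonneg i)]
  refine Finset.prod_congr rfl fun i _ => ?_
  rw [withDensity_apply _ (hs i),
    ofReal_integral_eq_lintegral_ofReal (h_int i) (ae_of_all _ (hf_nonneg i))]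

end Densities

section DiagonalMap

variable {α : Type*} [MeasurableSpace α] (μ : Measure α)

theorem map_diag_prod {A B : Set α} (hA : MeasurableSet A) (hB : MeasurableSet B) :
    μ.map (fun x => (x, x)) (A ×ˢ B) = μ (A ∩ B) := by
  rw [Measure.map_apply (by fun_prop) (hA.prod hB)]
  rfl

theorem map_diag_diagonal [MeasurableEq α] :
    μ.map (fun x => (x, x)) {q | q.1 = q.2} = μ univ := by
  rw [Measure.map_apply (by fun_prop) (measurableSet_eq_fun measurable_fst measurable_snd)]
  simp

end DiagonalMap

section StandardNormal

theorem stdNormalCdf_eq_cdf : stdNormalCdf = cdf (gaussianReal 0 1) := by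
  ext t
  have h_const : (2 * Real.pi) ^ (-(1 : ℝ) / 2) = (√(2 * Real.pi))⁻¹ := by
    rw [Real.sqrt_eq_rpow, ← Real.rpow_neg (by positivity), neg_div]
  rw [cdf_eq_real, Measure.real, gaussianReal_apply_eq_integral 0 one_ne_zero,
    ENNReal.toReal_ofReal (integral_nonneg fun x => gaussianPDFReal_nonneg 0 1 x)]
  simp only [stdNormalCdf, gaussianPDFReal, h_const, NNReal.coe_one, mul_one, sub_zero]

theorem monotone_stdNormalCdf : Monotone stdNormalCdf :=
  stdNormalCdf_eq_cdf ▸ monotone_cdf _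

theorem stdNormalCdf_nonneg (t : ℝ) : 0 ≤ stdNormalCdf t :=
  stdNormalCdf_eq_cdf ▸ cdf_nonneg _ t

theorem gaussianReal_Iic (m : ℝ) {v : ℝ≥0} (hv : v ≠ 0) (t : ℝ) :
    gaussianReal m v (Iic t) = ENNReal.ofReal (stdNormalCdf ((t - m) / √v)) := by
  have h_sqrt : 0 < √(v : ℝ) := Real.sqrt_pos.2 (NNReal.coe_pos.2 hv.pos)
  have h_map : (gaussianReal m v).map (fun x => (x - m) / √v) = gaussianReal 0 1 := by
    have h_scale := gaussianReal_map_div_const (μ := 0) (v := v) (√v)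
    have h_var : v / NNReal.mk (√v ^ 2) (sq_nonneg _) = 1 := by
      rw [div_eq_one_iff_eq]
      · exact NNReal.eq (Real.sq_sqrt v.coe_nonneg).symm
      · exact fun h => (pow_pos h_sqrt 2).ne' (congrArg NNReal.toReal h)
    rw [zero_div, h_var] at h_scale
    rw [← h_scale, ← sub_self m, ← gaussianReal_map_sub_const,
      Measure.map_map (by fun_prop) (by fun_prop)]
    rfl
  rw [stdNormalCdf_eq_cdf, ofReal_cdf, ← h_map, Measure.map_apply (by fun_prop) measurableSet_Iic]
  congr 1
  ext x
  simp [div_le_div_iff_of_pos_right h_sqrt]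

theorem gaussianReal_Ioi (m : ℝ) {v : ℝ≥0} (hv : v ≠ 0) (t : ℝ) :
    gaussianReal m v (Ioi t) = ENNReal.ofReal (stdNormalCdf ((m - t) / √v)) := by
  have := nullSingletonClass_gaussianReal (μ := m) hv
  have h_reflect : gaussianReal m v (Ici t) = gaussianReal (-m) v (Iic (-t)) := by
    rw [← gaussianReal_map_neg, Measure.map_apply measurable_neg measurableSet_Iic]
    simp
  rw [measure_congr Ioi_ae_eq_Ici, h_reflect, gaussianReal_Iic _ hv, neg_sub_neg]

theorem stdNormalCdf_zero : stdNormalCdf 0 = 1 / 2 := by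
  have h_total := measure_add_measure_compl (μ := gaussianReal 0 1) (measurableSet_Iic (a := 0))
  rw [compl_Iic, gaussianReal_Iic 0 one_ne_zero, gaussianReal_Ioi 0 one_ne_zero, measure_univ,
    sub_zero, zero_div, ← ENNReal.ofReal_add (stdNormalCdf_nonneg 0) (stdNormalCdf_nonneg 0),
    ENNReal.ofReal_eq_one] at h_total
  linarith

theorem gaussianReal_Iic_add_gaussianReal_Ioi (m : ℝ) (v : ℝ≥0) :
    gaussianReal (m + v) v (Iic (m + v / 2)) + gaussianReal m v (Ioi (m + v / 2)) =
      ENNReal.ofReal (2 * stdNormalCdf (-(1 / 2) * √v)) := by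
  rcases eq_or_ne v 0 with rfl | hv
  · simp [stdNormalCdf_zero]
  · have h_div : (v : ℝ) / √v = √v := Real.div_sqrt
    have h_left : (m + v / 2 - (m + v)) / √v = -(1 / 2) * √v := by
      linear_combination (-(1 / 2)) * h_div
    have h_right : (m - (m + v / 2)) / √v = -(1 / 2) * √v := by
      linear_combination (-(1 / 2)) * h_div
    rw [gaussianReal_Iic _ hv, gaussianReal_Ioi _ hv, h_left, h_right,
      ← ENNReal.ofReal_add (stdNormalCdf_nonneg _) (stdNormalCdf_nonneg _), ← two_mul]

end StandardNormal

section EuclideanNorm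

open scoped Matrix.Norms.L2Operator

variable {ι κ : Type*} [Fintype ι] [Fintype κ]

theorem euclNorm_eq_norm_toLp (x : ι → ℝ) : euclNorm x = ‖WithLp.toLp 2 x‖ := by
  rw [norm_eq_sqrt_real_inner, euclNorm]
  rfl

theorem euclNorm_nonneg (x : ι → ℝ) : 0 ≤ euclNorm x :=
  Real.sqrt_nonneg _

theorem euclNorm_sq (x : ι → ℝ) : euclNorm x ^ 2 = x ⬝ᵥ x :=
  Real.sq_sqrt (by simpa using dotProduct_star_self_nonneg x)

theorem dotProduct_le_euclNorm_mul_euclNorm (x y : ι → ℝ) :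
    x ⬝ᵥ y ≤ euclNorm x * euclNorm y := by
  rw [euclNorm_eq_norm_toLp, euclNorm_eq_norm_toLp, mul_comm]
  exact real_inner_le_norm (WithLp.toLp 2 y) (WithLp.toLp 2 x)

theorem euclNorm_transpose_mulVec_le (Δ : Matrix κ ι ℝ) (φ : κ → ℝ) :
    euclNorm (Δᵀ *ᵥ φ) ≤ euclNorm (vec Δ) * euclNorm φ := by
  refine le_of_sq_le_sq ?_ (mul_nonneg (euclNorm_nonneg _) (euclNorm_nonneg _))
  have h_row (i : ι) : (Δᵀ *ᵥ φ) i ^ 2 ≤ (∑ j, Δ j i ^ 2) * ∑ j, φ j ^ 2 :=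
    Finset.sum_mul_sq_le_sq_mul_sq Finset.univ (fun j => Δ j i) φ
  simp only [mul_pow, euclNorm_sq, dotProduct, vec, ← sq, Fintype.sum_prod_type, Finset.sum_mul]
  simpa only [Finset.sum_mul] using Finset.sum_le_sum fun i _ => h_row i

variable [DecidableEq ι]

theorem specNorm_nonneg (M : Matrix κ ι ℝ) : 0 ≤ specNorm M :=
  norm_nonneg _

theorem euclNorm_mulVec_le (M : Matrix κ ι ℝ) (x : ι → ℝ) :
    euclNorm (M *ᵥ x) ≤ specNorm M * euclNorm x := by
  rw [euclNorm_eq_norm_toLp, euclNorm_eq_norm_toLp]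
  exact l2_opNorm_mulVec M (WithLp.toLp 2 x)

theorem specNorm_mul_transpose_self [DecidableEq κ] (M : Matrix κ ι ℝ) :
    specNorm (M * Mᵀ) = specNorm M ^ 2 := by
  have h := l2_opNorm_conjTranspose_mul_self Mᴴ
  rwa [conjTranspose_conjTranspose, l2_opNorm_conjTranspose, ← sq] at h

theorem dotProduct_mulVec_self_le (M : Matrix ι ι ℝ) (x : ι → ℝ) :
    x ⬝ᵥ (M *ᵥ x) ≤ specNorm M * euclNorm x ^ 2 :=
  calc x ⬝ᵥ (M *ᵥ x) ≤ euclNorm x * euclNorm (M *ᵥ x) :=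
        dotProduct_le_euclNorm_mul_euclNorm _ _
    _ ≤ euclNorm x * (specNorm M * euclNorm x) :=
        mul_le_mul_of_nonneg_left (euclNorm_mulVec_le M x) (euclNorm_nonneg x)
    _ = specNorm M * euclNorm x ^ 2 := by ring

theorem exists_eq_mul_transpose {M : Matrix ι ι ℝ} (hM : M.PosDef) :
    ∃ C : Matrix ι ι ℝ, C.det ≠ 0 ∧ M = C * Cᵀ := by
  open scoped MatrixOrder in
  obtain ⟨C, hC_unit, hC⟩ :=
    CStarAlgebra.isStrictlyPositive_iff_eq_mul_star_self.mp hM.isStrictlyPositive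
  exact ⟨C, ((isUnit_iff_isUnit_det C).1 hC_unit).ne_zero, hC⟩

theorem euclNorm_sq_le_specNorm_mul {M : Matrix ι ι ℝ} (hM : M.PosDef) (x : ι → ℝ) :
    euclNorm x ^ 2 ≤ specNorm M * (x ⬝ᵥ (M⁻¹ *ᵥ x)) := by
  obtain ⟨C, -, hC⟩ := exists_eq_mul_transpose hM
  set y := M⁻¹ *ᵥ x
  have hx : C *ᵥ (Cᵀ *ᵥ y) = x := by
    rw [mulVec_mulVec, ← hC, mulVec_mulVec, mul_nonsing_inv _ hM.det_pos.ne'.isUnit, one_mulVec]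
  calc euclNorm x ^ 2 = euclNorm (C *ᵥ (Cᵀ *ᵥ y)) ^ 2 := by rw [hx]
    _ ≤ (specNorm C * euclNorm (Cᵀ *ᵥ y)) ^ 2 :=
        pow_le_pow_left₀ (euclNorm_nonneg _) (euclNorm_mulVec_le _ _) 2
    _ = specNorm M * (x ⬝ᵥ y) := by
        rw [mul_pow, ← specNorm_mul_transpose_self, ← hC, euclNorm_sq, dotProduct_mulVec,
          vecMul_transpose, hx]

theorem sqrt_quadForm_transpose_mulVec_le [DecidableEq κ] (M : Matrix ι ι ℝ)
    {N : Matrix (ι × κ) (ι × κ) ℝ} (hN : N.PosDef) (Δ : Matrix κ ι ℝ) (φ : κ → ℝ) {c : ℝ}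
    (hc : vec Δ ⬝ᵥ (N⁻¹ *ᵥ vec Δ) ≤ c) :
    √((Δᵀ *ᵥ φ) ⬝ᵥ (M *ᵥ (Δᵀ *ᵥ φ))) ≤ √(specNorm M * specNorm N * c) * euclNorm φ := by
  have h_Δ : euclNorm (vec Δ) ^ 2 ≤ specNorm N * c :=
    (euclNorm_sq_le_specNorm_mul hN _).trans (mul_le_mul_of_nonneg_left hc (specNorm_nonneg N))
  have h_quad : (Δᵀ *ᵥ φ) ⬝ᵥ (M *ᵥ (Δᵀ *ᵥ φ)) ≤ specNorm M * specNorm N * c * euclNorm φ ^ 2 :=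
    calc (Δᵀ *ᵥ φ) ⬝ᵥ (M *ᵥ (Δᵀ *ᵥ φ)) ≤ specNorm M * euclNorm (Δᵀ *ᵥ φ) ^ 2 :=
          dotProduct_mulVec_self_le M _
      _ ≤ specNorm M * (euclNorm (vec Δ) * euclNorm φ) ^ 2 := by
          gcongr
          · exact specNorm_nonneg M
          · exact euclNorm_nonneg _
          · exact euclNorm_transpose_mulVec_le Δ φ
      _ ≤ specNorm M * (specNorm N * c * euclNorm φ ^ 2) := by
          rw [mul_pow]
          gcongr
          exact specNorm_nonneg M
      _ = specNorm M * specNorm N * c * euclNorm φ ^ 2 := by ring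
  refine (Real.sqrt_le_sqrt h_quad).trans_eq ?_
  rw [Real.sqrt_mul' _ (sq_nonneg _), Real.sqrt_sq (euclNorm_nonneg φ)]

end EuclideanNorm

section GaussianMeasure

variable {ι : Type*} [Fintype ι]

theorem pi_gaussianReal_map_dotProduct (b : ι → ℝ) :
    (Measure.pi fun _ => gaussianReal 0 1).map (b ⬝ᵥ ·) =
      gaussianReal 0 (b ⬝ᵥ b).toNNReal := by
  let L : StrongDual ℝ (EuclideanSpace ℝ ι) := innerSL ℝ (WithLp.toLp 2 b)
  have h_law := IsGaussian.map_eq_gaussianReal (μ := stdGaussian (EuclideanSpace ℝ ι)) L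
  have h_L : L ∘ WithLp.toLp 2 = (b ⬝ᵥ ·) := by
    ext z
    simp [L, PiLp.inner_apply, dotProduct, mul_comm]
  have h_norm : ‖L‖ ^ 2 = b ⬝ᵥ b := by
    rw [innerSL_apply_norm, ← euclNorm_eq_norm_toLp, euclNorm_sq]
  rwa [integral_strongDual_stdGaussian, variance_dual_stdGaussian, ← map_pi_eq_stdGaussian,
    Measure.map_map (by fun_prop) (by fun_prop), h_L, h_norm] at h_law

variable [DecidableEq ι]

theorem gaussDensity_nonneg {S : Matrix ι ι ℝ} (hS : 0 ≤ S.det) (μ w : ι → ℝ) :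
    0 ≤ gaussDensity μ S w := by
  unfold gaussDensity
  positivity

theorem measurable_ofReal_gaussDensity (μ : ι → ℝ) (S : Matrix ι ι ℝ) :
    Measurable fun w => ENNReal.ofReal (gaussDensity μ S w) := by
  unfold gaussDensity
  exact (Continuous.measurable (by fun_prop)).ennreal_ofReal

theorem gaussDensity_add_left (μ a : ι → ℝ) (S : Matrix ι ι ℝ) (w : ι → ℝ) :
    gaussDensity (a + μ) S (a + w) = gaussDensity μ S w := by
  simp only [gaussDensity, add_sub_add_left_eq_sub]

theorem gaussDensity_mulVec {C S : Matrix ι ι ℝ} (hC : C.det ≠ 0) (hS : 0 ≤ S.det)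
    (μ w : ι → ℝ) :
    |C.det| * gaussDensity (C *ᵥ μ) (C * S * Cᵀ) (C *ᵥ w) = gaussDensity μ S w := by
  have h_det : |C.det| * (C * S * Cᵀ).det ^ (-(1 : ℝ) / 2) = S.det ^ (-(1 : ℝ) / 2) := by
    have h_sq : (C * S * Cᵀ).det = |C.det| ^ (2 : ℝ) * S.det := by
      rw [Real.rpow_two, sq_abs, det_mul, det_mul, det_transpose]
      ring
    rw [h_sq, Real.mul_rpow (by positivity) hS, ← Real.rpow_mul (abs_nonneg _), ← mul_assoc]
    norm_num [Real.rpow_neg_one, hC]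
  have h_quad (x : ι → ℝ) :
      (C *ᵥ x) ⬝ᵥ ((C * S * Cᵀ)⁻¹ *ᵥ (C *ᵥ x)) = x ⬝ᵥ (S⁻¹ *ᵥ x) := by
    have h_conj : Cᵀ * ((C * S * Cᵀ)⁻¹ * C) = S⁻¹ := by
      have h_unit : IsUnit C.det := hC.isUnit
      rw [Matrix.mul_inv_rev, Matrix.mul_inv_rev, Matrix.mul_assoc, Matrix.mul_assoc,
        nonsing_inv_mul _ h_unit, Matrix.mul_one,
        mul_nonsing_inv_cancel_left _ _ (by rwa [det_transpose])]
    rw [mulVec_mulVec, ← vecMul_transpose, ← dotProduct_mulVec, mulVec_mulVec, h_conj]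
  rw [gaussDensity, gaussDensity, ← h_det, ← mulVec_sub, h_quad]
  ring

theorem gaussMeasure_map_add_left (μ a : ι → ℝ) (S : Matrix ι ι ℝ) :
    (gaussMeasure μ S).map (a + ·) = gaussMeasure (a + μ) S := by
  have h := map_withDensity_comp volume (measurable_const_add a)
    (measurable_ofReal_gaussDensity (a + μ) S)
  simpa only [gaussMeasure, Function.comp_def, gaussDensity_add_left, map_add_left_eq_self] using h

theorem gaussMeasure_map_mulVec {C S : Matrix ι ι ℝ} (hC : C.det ≠ 0) (hS : 0 ≤ S.det)
    (μ : ι → ℝ) :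
    (gaussMeasure μ S).map (C *ᵥ ·) = gaussMeasure (C *ᵥ μ) (C * S * Cᵀ) := by
  have h_meas : Measurable (C *ᵥ ·) := (C.mulVecLin.continuous_of_finiteDimensional).measurable
  have h_density : gaussMeasure μ S = ENNReal.ofReal |C.det| •
      volume.withDensity ((fun w => ENNReal.ofReal (gaussDensity (C *ᵥ μ) (C * S * Cᵀ) w)) ∘
        (C *ᵥ ·)) := by
    rw [← withDensity_smul' _ _ ENNReal.ofReal_ne_top, gaussMeasure]
    congr with w
    rw [Pi.smul_apply, smul_eq_mul, Function.comp_apply, ← ENNReal.ofReal_mul (abs_nonneg _),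
      gaussDensity_mulVec hC hS]
  have h_volume : volume.map (C *ᵥ ·) = ENNReal.ofReal |C.det⁻¹| • (volume : Measure (ι → ℝ)) :=
    Real.map_matrix_volume_pi_eq_smul_volume_pi hC
  rw [h_density, Measure.map_smul, map_withDensity_comp _ h_meas
    (measurable_ofReal_gaussDensity _ _), h_volume, withDensity_smul_measure, smul_smul,
    ← ENNReal.ofReal_mul (abs_nonneg _), ← abs_mul, mul_inv_cancel₀ hC, abs_one,
    ENNReal.ofReal_one, one_smul, gaussMeasure]

theorem gaussDensity_zero_one (w : ι → ℝ) :
    gaussDensity 0 1 w = ∏ i, gaussianPDFReal 0 1 (w i) := by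
  have h_const : (2 * Real.pi) ^ (-(Fintype.card ι : ℝ) / 2) =
      (√(2 * Real.pi))⁻¹ ^ Fintype.card ι := by
    rw [Real.sqrt_eq_rpow, ← Real.rpow_neg (by positivity), ← Real.rpow_natCast,
      ← Real.rpow_mul (by positivity)]
    ring_nf
  have h_exponent : -(1 / 2) * (w ⬝ᵥ w) = ∑ i, -(w i) ^ 2 / 2 := by
    rw [dotProduct, Finset.mul_sum]
    exact Finset.sum_congr rfl fun i _ => by ring
  simp only [gaussDensity, gaussianPDFReal, det_one, Real.one_rpow, inv_one, one_mulVec, sub_zero,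
    mul_one, NNReal.coe_one, Finset.prod_mul_distrib, Finset.prod_const, Finset.card_univ,
    ← Real.exp_sum, h_const, h_exponent]

theorem gaussMeasure_zero_one :
    gaussMeasure (0 : ι → ℝ) 1 = Measure.pi fun _ => gaussianReal 0 1 := by
  simp only [gaussMeasure, gaussDensity_zero_one, gaussianReal_of_var_ne_zero 0 one_ne_zero,
    gaussianPDF_def]
  rw [pi_withDensity_ofReal _ (fun _ => integrable_gaussianPDFReal 0 1)
    fun _ => gaussianPDFReal_nonneg 0 1]
  rfl

theorem gaussMeasure_eq_map_pi {S C : Matrix ι ι ℝ} (hC : C.det ≠ 0) (hS : S = C * Cᵀ)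
    (μ : ι → ℝ) :
    gaussMeasure μ S = (Measure.pi fun _ => gaussianReal 0 1).map fun z => μ + C *ᵥ z := by
  have h_linear := gaussMeasure_map_mulVec (S := 1) hC (by simp) 0
  have h_meas : Measurable (C *ᵥ ·) := (C.mulVecLin.continuous_of_finiteDimensional).measurable
  rw [gaussMeasure_zero_one, mulVec_zero, Matrix.mul_one, ← hS] at h_linear
  have h_affine := gaussMeasure_map_add_left 0 μ S
  rw [add_zero, ← h_linear, Measure.map_map (measurable_const_add μ) h_meas] at h_affine
  exact h_affine.symm

theorem gaussMeasure_map_dotProduct {S : Matrix ι ι ℝ} (hS : S.PosDef) (μ a : ι → ℝ) :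
    (gaussMeasure μ S).map (a ⬝ᵥ ·) = gaussianReal (a ⬝ᵥ μ) (a ⬝ᵥ (S *ᵥ a)).toNNReal := by
  obtain ⟨C, hC_det, hC⟩ := exists_eq_mul_transpose hS
  have h_dot (b : ι → ℝ) : Measurable (b ⬝ᵥ ·) := Continuous.measurable (by fun_prop)
  have h_comp : ((a ⬝ᵥ ·) ∘ fun z => μ + C *ᵥ z) = (a ⬝ᵥ μ + ·) ∘ ((Cᵀ *ᵥ a) ⬝ᵥ ·) := by
    ext z
    simp only [Function.comp_apply, dotProduct_add, dotProduct_mulVec, mulVec_transpose]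
  have h_var : (Cᵀ *ᵥ a) ⬝ᵥ (Cᵀ *ᵥ a) = a ⬝ᵥ (S *ᵥ a) := by
    rw [hC, ← mulVec_mulVec, dotProduct_mulVec a, mulVec_transpose]
  rw [gaussMeasure_eq_map_pi hC_det hC, Measure.map_map (h_dot a)
    (Continuous.measurable (by fun_prop)), h_comp, ← Measure.map_map (by fun_prop) (h_dot _),
    pi_gaussianReal_map_dotProduct, gaussianReal_map_const_add, zero_add, h_var]

end GaussianMeasure

section Overlap

variable {ι : Type*} [Fintype ι] [DecidableEq ι]

/-- The common part of `N(μ, S)` and `N(ν, S)`: the measure whose Lebesgue density is the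
pointwise minimum of the two Gaussian densities. -/
noncomputable def gaussOverlap (μ ν : ι → ℝ) (S : Matrix ι ι ℝ) : Measure (ι → ℝ) :=
  volume.withDensity fun w => ENNReal.ofReal (min (gaussDensity μ S w) (gaussDensity ν S w))

theorem gaussOverlap_le_left (μ ν : ι → ℝ) (S : Matrix ι ι ℝ) :
    gaussOverlap μ ν S ≤ gaussMeasure μ S :=
  withDensity_mono (ae_of_all _ fun _ => ENNReal.ofReal_le_ofReal (min_le_left _ _))

theorem gaussOverlap_le_right (μ ν : ι → ℝ) (S : Matrix ι ι ℝ) :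
    gaussOverlap μ ν S ≤ gaussMeasure ν S :=
  withDensity_mono (ae_of_all _ fun _ => ENNReal.ofReal_le_ofReal (min_le_right _ _))

theorem gaussOverlap_map_add_left (μ ν a : ι → ℝ) (S : Matrix ι ι ℝ) :
    (gaussOverlap μ ν S).map (a + ·) = gaussOverlap (a + μ) (a + ν) S := by
  have h_meas : Measurable fun w =>
      ENNReal.ofReal (min (gaussDensity (a + μ) S w) (gaussDensity (a + ν) S w)) := by
    simp only [ENNReal.ofReal_min]
    exact (measurable_ofReal_gaussDensity _ S).min (measurable_ofReal_gaussDensity _ S)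
  have h := map_withDensity_comp volume (measurable_const_add a) h_meas
  simpa only [gaussOverlap, Function.comp_def, gaussDensity_add_left, map_add_left_eq_self] using h

theorem gaussDensity_le_gaussDensity_iff {S : Matrix ι ι ℝ} (hS : S.PosDef) (μ ν w : ι → ℝ) :
    gaussDensity μ S w ≤ gaussDensity ν S w ↔
      (S⁻¹ *ᵥ (μ - ν)) ⬝ᵥ w ≤
        (S⁻¹ *ᵥ (μ - ν)) ⬝ᵥ ν + (μ - ν) ⬝ᵥ (S⁻¹ *ᵥ (μ - ν)) / 2 := by
  have h_const : 0 < (2 * Real.pi) ^ (-(Fintype.card ι : ℝ) / 2) * S.det ^ (-(1 : ℝ) / 2) := by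
    have := hS.det_pos
    positivity
  have h_symm (x y : ι → ℝ) : x ⬝ᵥ (S⁻¹ *ᵥ y) = y ⬝ᵥ (S⁻¹ *ᵥ x) := by
    have h_transpose : (S⁻¹)ᵀ = S⁻¹ := hS.inv.isHermitian
    rw [dotProduct_mulVec, ← mulVec_transpose, h_transpose, dotProduct_comm]
  have h_expand : (w - μ) ⬝ᵥ (S⁻¹ *ᵥ (w - μ)) = (w - ν) ⬝ᵥ (S⁻¹ *ᵥ (w - ν)) -
      2 * ((w - ν) ⬝ᵥ (S⁻¹ *ᵥ (μ - ν))) + (μ - ν) ⬝ᵥ (S⁻¹ *ᵥ (μ - ν)) := by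
    rw [← sub_sub_sub_cancel_right w μ ν, mulVec_sub, sub_dotProduct, dotProduct_sub,
      dotProduct_sub, h_symm (μ - ν) (w - ν)]
    ring
  have h_shift : (w - ν) ⬝ᵥ (S⁻¹ *ᵥ (μ - ν)) =
      (S⁻¹ *ᵥ (μ - ν)) ⬝ᵥ w - (S⁻¹ *ᵥ (μ - ν)) ⬝ᵥ ν := by
    rw [dotProduct_comm, dotProduct_sub]
  rw [gaussDensity, gaussDensity, mul_le_mul_iff_right₀ h_const, Real.exp_le_exp, h_expand,
    h_shift]
  constructor <;> intro h <;> linarith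

theorem gaussOverlap_univ_eq_add {S : Matrix ι ι ℝ} (hS : 0 ≤ S.det) (μ ν : ι → ℝ) :
    gaussOverlap μ ν S univ =
      gaussMeasure μ S {w | gaussDensity μ S w ≤ gaussDensity ν S w} +
        gaussMeasure ν S {w | gaussDensity μ S w ≤ gaussDensity ν S w}ᶜ := by
  simp only [gaussOverlap, gaussMeasure, withDensity_apply _ MeasurableSet.univ,
    Measure.restrict_univ, ENNReal.ofReal_min, compl_ofPred, not_le]
  rw [lintegral_min_eq_withDensity_add_withDensity volume (measurable_ofReal_gaussDensity μ S)
    (measurable_ofReal_gaussDensity ν S)]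
  simp only [← not_le, ENNReal.ofReal_le_ofReal_iff (gaussDensity_nonneg hS ν _)]

theorem gaussOverlap_univ {S : Matrix ι ι ℝ} (hS : S.PosDef) (μ ν : ι → ℝ) :
    gaussOverlap μ ν S univ =
      ENNReal.ofReal (2 * stdNormalCdf (-(1 / 2) * √((μ - ν) ⬝ᵥ (S⁻¹ *ᵥ (μ - ν))))) := by
  set a := S⁻¹ *ᵥ (μ - ν) with ha
  set q := (μ - ν) ⬝ᵥ a with hq
  have hq_nonneg : 0 ≤ q := hS.inv.posSemidef.dotProduct_mulVec_nonneg (μ - ν)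
  have h_dot : Measurable (a ⬝ᵥ ·) := Continuous.measurable (by fun_prop)
  have h_var : a ⬝ᵥ (S *ᵥ a) = q := by
    rw [ha, mulVec_mulVec, mul_nonsing_inv _ hS.det_pos.ne'.isUnit, one_mulVec, dotProduct_comm]
  have h_mean : a ⬝ᵥ μ = a ⬝ᵥ ν + q := by
    rw [hq, dotProduct_comm (μ - ν), dotProduct_sub, add_sub_cancel]
  have h_half_space : {w | gaussDensity μ S w ≤ gaussDensity ν S w} =
      (a ⬝ᵥ ·) ⁻¹' Iic (a ⬝ᵥ ν + q / 2) :=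
    ext (gaussDensity_le_gaussDensity_iff hS μ ν)
  have h_tails := gaussianReal_Iic_add_gaussianReal_Ioi (a ⬝ᵥ ν) q.toNNReal
  rw [Real.coe_toNNReal q hq_nonneg] at h_tails
  rw [gaussOverlap_univ_eq_add hS.det_pos.le, h_half_space, ← preimage_compl, compl_Iic,
    ← Measure.map_apply h_dot measurableSet_Iic, ← Measure.map_apply h_dot measurableSet_Ioi,
    gaussMeasure_map_dotProduct hS, gaussMeasure_map_dotProduct hS, h_var, h_mean, h_tails]

end Overlap

theorem gauss_subprob_coupling_credible_general {ι κ : Type*} [Fintype ι] [DecidableEq ι]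
    [Fintype κ] [DecidableEq κ]
    (S : Matrix ι ι ℝ) (hS : S.PosDef) (SN : Matrix (ι × κ) (ι × κ) ℝ) (hSN : SN.PosDef)
    (θ θhat : Matrix κ ι ℝ) (φ : κ → ℝ) (c : ℝ)
    (hmem : vec (θ - θhat) ⬝ᵥ (SN⁻¹ *ᵥ vec (θ - θhat)) ≤ c) :
    let γ : ι → ℝ := (θ - θhat)ᵀ *ᵥ φ
    let ρ : Measure (ι → ℝ) :=
      volume.withDensity fun w =>
        ENNReal.ofReal (min (gaussDensity 0 S w) (gaussDensity (-γ) S w))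
    let v : Measure ((ι → ℝ) × (ι → ℝ)) :=
      ρ.map fun w => (θᵀ *ᵥ φ + w, θᵀ *ᵥ φ + w)
    let r : ℝ := specNorm S⁻¹ * specNorm SN * c
    v univ = v {q : (ι → ℝ) × (ι → ℝ) | q.1 = q.2} ∧
    v univ = ENNReal.ofReal (2 * stdNormalCdf (-(1 / 2) * √(γ ⬝ᵥ (S⁻¹ *ᵥ γ)))) ∧
    ENNReal.ofReal (2 * stdNormalCdf (-(√r / 2) * euclNorm φ)) ≤ v univ ∧
    (∀ A : Set (ι → ℝ), MeasurableSet A →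
      v (A ×ˢ (univ : Set (ι → ℝ))) ≤ gaussMeasure (θhatᵀ *ᵥ φ) S A) ∧
    (∀ A : Set (ι → ℝ), MeasurableSet A →
      v ((univ : Set (ι → ℝ)) ×ˢ A) ≤ gaussMeasure (θᵀ *ᵥ φ) S A) := by
  intro γ ρ v r
  have h_diag : v = (gaussOverlap (θᵀ *ᵥ φ) (θhatᵀ *ᵥ φ) S).map fun x => (x, x) := by
    have h_mean : θᵀ *ᵥ φ + -γ = θhatᵀ *ᵥ φ := by
      simp only [γ, transpose_sub, sub_mulVec, neg_sub, add_sub_cancel]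
    have h_shift := gaussOverlap_map_add_left 0 (-γ) (θᵀ *ᵥ φ) S
    rw [add_zero, h_mean] at h_shift
    rw [← h_shift, Measure.map_map (by fun_prop) (measurable_const_add _)]
    rfl
  have h_supp : v univ = v {q | q.1 = q.2} := by
    rw [h_diag, map_diag_diagonal, Measure.map_apply (by fun_prop) .univ, preimage_univ]
  have h_mass : v univ = ENNReal.ofReal (2 * stdNormalCdf (-(1 / 2) * √(γ ⬝ᵥ (S⁻¹ *ᵥ γ)))) := by
    rw [h_supp, h_diag, map_diag_diagonal, gaussOverlap_univ hS, ← sub_mulVec, ← transpose_sub]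
  have h_maha : √(γ ⬝ᵥ (S⁻¹ *ᵥ γ)) ≤ √r * euclNorm φ :=
    sqrt_quadForm_transpose_mulVec_le S⁻¹ hSN (θ - θhat) φ hmem
  refine ⟨h_supp, h_mass, ?_, fun A hA => ?_, fun A hA => ?_⟩
  · rw [h_mass]
    exact ENNReal.ofReal_le_ofReal
      (mul_le_mul_of_nonneg_left (monotone_stdNormalCdf (by linarith)) zero_le_two)
  · rw [h_diag, map_diag_prod _ hA .univ, inter_univ]
    exact gaussOverlap_le_right _ _ S A
  · rw [h_diag, map_diag_prod _ .univ hA, univ_inter]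
    exact gaussOverlap_le_left _ _ S A

/-- **Theorem 5 of the paper at a fixed state-input pair.**
For every parameter `θ` in the credible ellipsoid of radius `c` around the estimate `θ̂`,
the pushforward `v` of the measure with density `min(g_{0,S}, g_{−γ,S})` (with
`γ = (θ − θ̂)ᵀ φ`) under `w ↦ (θᵀφ + w, θᵀφ + w)` is a sub-probability coupling of
`N(θ̂ᵀφ, S)` and `N(θᵀφ, S)` over the diagonal with respect to
`δ := 1 − 2 Φ(−(√r/2)‖φ‖)`, where `r := ‖S⁻¹‖ ‖Σ_N‖ c`. -/
theorem gauss_subprob_coupling_credible {m n : ℕ} (hm : 1 ≤ m) (hn : 1 ≤ n)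
    (S : Matrix (Fin n) (Fin n) ℝ) (hS : S.PosDef)
    (SN : Matrix (Fin n × Fin m) (Fin n × Fin m) ℝ) (hSN : SN.PosDef)
    (θ θhat : Matrix (Fin m) (Fin n) ℝ) (φ : Fin m → ℝ) (c : ℝ) (hc : 0 ≤ c)
    (hmem : vecOf (θ - θhat) ⬝ᵥ (SN⁻¹ *ᵥ vecOf (θ - θhat)) ≤ c) :
    let γ : Fin n → ℝ := (θ - θhat)ᵀ *ᵥ φ
    let ρ : Measure (Fin n → ℝ) :=
      volume.withDensity fun w =>
        ENNReal.ofReal (min (gaussDensity 0 S w) (gaussDensity (-γ) S w))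
    let v : Measure ((Fin n → ℝ) × (Fin n → ℝ)) :=
      ρ.map fun w => (θᵀ *ᵥ φ + w, θᵀ *ᵥ φ + w)
    let r : ℝ := specNorm S⁻¹ * specNorm SN * c
    v univ = v {q : (Fin n → ℝ) × (Fin n → ℝ) | q.1 = q.2} ∧
    v univ = ENNReal.ofReal (2 * stdNormalCdf (-(1 / 2) * Real.sqrt (γ ⬝ᵥ (S⁻¹ *ᵥ γ)))) ∧
    ENNReal.ofReal (2 * stdNormalCdf (-(Real.sqrt r / 2) * euclNorm φ)) ≤ v univ ∧
    (∀ A : Set (Fin n → ℝ), MeasurableSet A →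
      v (A ×ˢ (univ : Set (Fin n → ℝ))) ≤ gaussMeasure (θhatᵀ *ᵥ φ) S A) ∧
    (∀ A : Set (Fin n → ℝ), MeasurableSet A →
      v ((univ : Set (Fin n → ℝ)) ×ˢ A) ≤ gaussMeasure (θᵀ *ᵥ φ) S A) :=
  gauss_subprob_coupling_credible_general S hS SN hSN θ θhat φ c hmem
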